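/- Let A_i ∈ ℝ^{m×d_i} and C_i ∈ ℝ^{p_i×d_i} for i = 1,…,n, with 𝐀 = diag(A₁,…,Aₙ), 𝐂 = diag(C₁,…,Cₙ), 𝐀' = (A₁ ⋯ Aₙ) the horizontal concatenation, and let W ∈ ℝ^{n×n} be a gossip matrix with 𝐖 = W ⊗ I_m. Let P_{ker 𝐂} denote the orthogonal projector onto ker 𝐂 and suppose μ̃ = (1/n)σ_min+²(𝐀' P_{ker 𝐂}) > 0. Set L_A = max_i σ_max²(A_i), L_S = (1/n)σ_max²(𝐀'), μ_W = λ_min+(W)², μ_C = σ_min+²(𝐂), and choose α² = (L_A + μ̃/4)/μ_W, β² = (L_S + μ̃/2)/μ_C. Then the block matrix B = [[𝐀, α𝐖], [β𝐂, 0]] satisfies σ_min+²(B) ≥ μ̃/4, i.e., ‖B^⊤ z‖² ≥ (μ̃/4)‖z‖² for every z in the orthogonal complement of ker B^⊤. -/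

import Mathlib

/-!
The nonzero singular values of `B` and `Bᵀ` agree, so it suffices to bound `Bᵀ` from below on
`(ker Bᵀ)ᗮ`. An element `z` of this space is the shortest vector of its class modulo `ker Bᵀ`, so
the bound may be checked on another representative. Writing `z = (u, v)` and splitting
`u = (w, …, w) + h` into its average and a remainder whose blocks sum to zero, the representative
is chosen with `w ∈ range (𝐀' P)` and `v ∈ range 𝐂` (`exists_reduced_pair`).

Then `Bᵀ z = (g + 𝐀ᵀ h, α 𝐖 h)` with `g = 𝐀'ᵀ w + β 𝐂ᵀ v`.
* The component of `g` in `ker 𝐂` is `P 𝐀'ᵀ w`, of squared norm at least `n μ̃ ‖w‖²`. The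
  orthogonal component is `β 𝐂ᵀ v`, of squared norm at least `(L_S + μ̃/2) ‖v‖²`, plus
  a perturbation of squared norm at most `n L_S ‖w‖²`. A weighted Young inequality gives
  `‖g‖² ≥ (μ̃/2) (n ‖w‖² + ‖v‖²)` (`consensus_local_bound`).
* `‖g + 𝐀ᵀ h‖² ≥ ‖g‖²/2 - L_A ‖h‖²`, and the loss is compensated by
  `α² ‖𝐖 h‖² ≥ (L_A + μ̃/4) ‖h‖²`, since `h` is orthogonal to `ker 𝐖`.
-/

open Matrix
open scoped BigOperators

noncomputable section

/-- Squared Euclidean norm of a vector. -/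
def sqnorm {ι : Type*} [Fintype ι] (v : ι → ℝ) : ℝ := ∑ i, (v i) ^ 2

/-- Squared largest singular value of a real matrix. -/
def sigmaMaxSq {ι κ : Type*} [Fintype ι] [Fintype κ] (M : Matrix ι κ ℝ) : ℝ :=
  sSup {r : ℝ | ∃ x : κ → ℝ, sqnorm x = 1 ∧ r = sqnorm (M.mulVec x)}

/-- Squared smallest positive singular value of a real matrix
(infimum of `‖Mx‖²` over unit vectors orthogonal to `ker M`). -/
def sigmaMinPosSq {ι κ : Type*} [Fintype ι] [Fintype κ] (M : Matrix ι κ ℝ) : ℝ :=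
  sInf {r : ℝ | ∃ x : κ → ℝ,
    (∀ y : κ → ℝ, M.mulVec y = 0 → x ⬝ᵥ y = 0) ∧ sqnorm x = 1 ∧ r = sqnorm (M.mulVec x)}

/-- Largest eigenvalue of a symmetric real matrix (Rayleigh quotient form). -/
def lamMax {ι : Type*} [Fintype ι] (M : Matrix ι ι ℝ) : ℝ :=
  sSup {r : ℝ | ∃ x : ι → ℝ, sqnorm x = 1 ∧ r = x ⬝ᵥ M.mulVec x}

/-- Smallest positive eigenvalue of a symmetric PSD real matrix (Rayleigh quotient
over unit vectors orthogonal to the kernel). -/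
def lamMinPos {ι : Type*} [Fintype ι] (M : Matrix ι ι ℝ) : ℝ :=
  sInf {r : ℝ | ∃ x : ι → ℝ,
    (∀ y : ι → ℝ, M.mulVec y = 0 → x ⬝ᵥ y = 0) ∧ sqnorm x = 1 ∧ r = x ⬝ᵥ M.mulVec x}

/-- Block-diagonal matrix `diag(A₁,…,Aₙ)` with row blocks of equal size `m`,
as a matrix from `ℝ^d = Σᵢ ℝ^{dᵢ}` to `(ℝ^m)^n`. -/
def blockDiagA {n m : ℕ} {d : Fin n → ℕ} (A : ∀ i, Matrix (Fin m) (Fin (d i)) ℝ) :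
    Matrix (Fin n × Fin m) ((i : Fin n) × Fin (d i)) ℝ :=
  Matrix.of fun p q => if p.1 = q.1 then A q.1 p.2 q.2 else 0

/-- Horizontal concatenation `(A₁ ⋯ Aₙ)`. -/
def hcat {n m : ℕ} {d : Fin n → ℕ} (A : ∀ i, Matrix (Fin m) (Fin (d i)) ℝ) :
    Matrix (Fin m) ((i : Fin n) × Fin (d i)) ℝ :=
  Matrix.of fun r q => A q.1 r q.2

/-- Kronecker product `W ⊗ I_m`, acting on `(ℝ^m)^n`. -/
def kronW (m : ℕ) {n : ℕ} (W : Matrix (Fin n) (Fin n) ℝ) :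
    Matrix (Fin n × Fin m) (Fin n × Fin m) ℝ :=
  Matrix.of fun p q => W p.1 q.1 * (if p.2 = q.2 then 1 else 0)

/-- Kronecker product `I_n ⊗ C`. -/
def kronIdC (n : ℕ) {p d : ℕ} (C : Matrix (Fin p) (Fin d) ℝ) :
    Matrix (Fin n × Fin p) (Fin n × Fin d) ℝ :=
  Matrix.of fun pq q => (if pq.1 = q.1 then (1 : ℝ) else 0) * C pq.2 q.2

/-- The orthogonal projector of `(ℝ^m)^n` onto the consensus subspace
`L_m = {(y₁,…,yₙ) : y₁ = ⋯ = yₙ}` (each block is replaced by the average). -/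
def consensusProj (n m : ℕ) : Matrix (Fin n × Fin m) (Fin n × Fin m) ℝ :=
  Matrix.of fun p q => (if p.2 = q.2 then (1 : ℝ) else 0) / n

/-! ### Euclidean norms, kernels and ranges -/

theorem sqnorm_eq_dot {ι : Type*} [Fintype ι] (v : ι → ℝ) : sqnorm v = v ⬝ᵥ v := by
  simp [sqnorm, dotProduct, sq]

theorem sqnorm_nonneg {ι : Type*} [Fintype ι] (v : ι → ℝ) : 0 ≤ sqnorm v :=
  Finset.sum_nonneg fun _ _ => sq_nonneg _

theorem sqnorm_eq_zero {ι : Type*} [Fintype ι] {v : ι → ℝ} (h : sqnorm v = 0) : v = 0 := by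
  rw [sqnorm_eq_dot] at h
  exact dotProduct_self_eq_zero.mp h

theorem sqnorm_smul {ι : Type*} [Fintype ι] (c : ℝ) (v : ι → ℝ) :
    sqnorm (c • v) = c ^ 2 * sqnorm v := by
  simp [sqnorm, mul_pow, Finset.mul_sum]

theorem sqnorm_add {ι : Type*} [Fintype ι] (v w : ι → ℝ) :
    sqnorm (v + w) = sqnorm v + 2 * (v ⬝ᵥ w) + sqnorm w := by
  simp only [sqnorm_eq_dot, add_dotProduct, dotProduct_add, dotProduct_comm w v]
  ring

theorem dot_sq_le {ι : Type*} [Fintype ι] (v w : ι → ℝ) :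
    (v ⬝ᵥ w) ^ 2 ≤ sqnorm v * sqnorm w :=
  Finset.sum_mul_sq_le_sq_mul_sq _ _ _

theorem mulVec_dot {ι κ : Type*} [Fintype ι] [Fintype κ] (M : Matrix ι κ ℝ) (x : κ → ℝ)
    (y : ι → ℝ) : M.mulVec x ⬝ᵥ y = x ⬝ᵥ Mᵀ.mulVec y := by
  rw [dotProduct_comm, dotProduct_mulVec, ← mulVec_transpose, dotProduct_comm]

/-- The normal equations of a least squares problem are solvable. -/
theorem exists_normal_eq {ι κ : Type*} [Fintype ι] [Fintype κ]
    (M : Matrix ι κ ℝ) (z : ι → ℝ) :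
    ∃ x, Mᵀ.mulVec (M.mulVec x) = Mᵀ.mulVec z := by
  classical
  have hle : LinearMap.range (Mᵀ * M).mulVecLin ≤ LinearMap.range Mᵀ.mulVecLin := by
    rw [Matrix.mulVecLin_mul]
    exact LinearMap.range_comp_le_range _ _
  have heq := Submodule.eq_of_le_of_finrank_eq hle (by
    have h1 := Matrix.rank_transpose_mul_self M
    have h2 := Matrix.rank_transpose M
    unfold Matrix.rank at h1 h2
    rw [h1, h2])
  have hz : Mᵀ.mulVec z ∈ LinearMap.range (Mᵀ * M).mulVecLin := by
    rw [heq]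
    exact ⟨z, rfl⟩
  obtain ⟨x, hx⟩ := hz
  exact ⟨x, by rw [Matrix.mulVec_mulVec]; exact hx⟩

theorem mem_range_transpose {ι κ : Type*} [Fintype ι] [Fintype κ]
    (M : Matrix ι κ ℝ) (x : κ → ℝ) (h : ∀ y, M.mulVec y = 0 → x ⬝ᵥ y = 0) :
    ∃ z, x = Mᵀ.mulVec z := by
  obtain ⟨z, hz⟩ := exists_normal_eq Mᵀ x
  rw [transpose_transpose] at hz
  have hk : M.mulVec (x - Mᵀ.mulVec z) = 0 := by rw [mulVec_sub, hz, sub_self]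
  refine ⟨z, sub_eq_zero.mp (sqnorm_eq_zero ?_)⟩
  have h1 := h _ hk
  have h2 : Mᵀ.mulVec z ⬝ᵥ (x - Mᵀ.mulVec z) = 0 := by
    rw [mulVec_dot, transpose_transpose, hk, dotProduct_zero]
  rw [sqnorm_eq_dot, sub_dotProduct, h1, h2, sub_zero]

/-! ### Extreme singular values -/

theorem sigmaMinPosSq_mul_le {ι κ : Type*} [Fintype ι] [Fintype κ] (M : Matrix ι κ ℝ)
    (x : κ → ℝ) (h : ∀ y, M.mulVec y = 0 → x ⬝ᵥ y = 0) :
    sigmaMinPosSq M * sqnorm x ≤ sqnorm (M.mulVec x) := by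
  rcases (sqnorm_nonneg x).eq_or_lt with h0 | h0
  · rw [← h0, mul_zero]
    exact sqnorm_nonneg _
  have hs : (Real.sqrt (sqnorm x))⁻¹ ^ 2 = (sqnorm x)⁻¹ := by
    rw [inv_pow, Real.sq_sqrt h0.le]
  have : sigmaMinPosSq M ≤ (sqnorm x)⁻¹ * sqnorm (M.mulVec x) := by
    refine csInf_le ⟨0, ?_⟩ ⟨(Real.sqrt (sqnorm x))⁻¹ • x, ?_, ?_, ?_⟩
    · rintro r ⟨y, -, -, rfl⟩
      exact sqnorm_nonneg _
    · intro y hy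
      rw [smul_dotProduct, h y hy, smul_zero]
    · rw [sqnorm_smul, hs, inv_mul_cancel₀ h0.ne']
    · rw [mulVec_smul, sqnorm_smul, hs]
  rwa [inv_mul_eq_div, le_div_iff₀ h0] at this

/-- A lower bound for `M` on `(ker M)ᗮ = range Mᵀ` transfers to `Mᵀ` on `range M`: nonzero singular
values of a matrix and its transpose agree. -/
theorem lower_bound_transpose {ι κ : Type*} [Fintype ι] [Fintype κ] (M : Matrix ι κ ℝ)
    (c : ℝ) (h : ∀ w, c * sqnorm (Mᵀ.mulVec w) ≤ sqnorm (M.mulVec (Mᵀ.mulVec w))) (z : κ → ℝ) :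
    c * sqnorm (M.mulVec z) ≤ sqnorm (Mᵀ.mulVec (M.mulVec z)) := by
  rcases le_or_gt c 0 with hc | hc
  · exact (mul_nonpos_of_nonpos_of_nonneg hc (sqnorm_nonneg _)).trans (sqnorm_nonneg _)
  obtain ⟨x, hx⟩ := exists_normal_eq Mᵀ z
  rw [transpose_transpose] at hx
  have h1 := h x
  have h2 : sqnorm (M.mulVec z) = Mᵀ.mulVec (M.mulVec z) ⬝ᵥ Mᵀ.mulVec x := by
    rw [mulVec_dot, transpose_transpose, hx, sqnorm_eq_dot]
  have h3 := dot_sq_le (Mᵀ.mulVec (M.mulVec z)) (Mᵀ.mulVec x)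
  rw [← h2] at h3
  rw [hx] at h1
  rcases (sqnorm_nonneg (M.mulVec z)).eq_or_lt with h0 | h0
  · rw [← h0, mul_zero]
    exact sqnorm_nonneg _
  refine le_of_mul_le_mul_right ?_ h0
  nlinarith [mul_le_mul_of_nonneg_left h1 (sqnorm_nonneg (Mᵀ.mulVec (M.mulVec z)))]

theorem sigmaMinPosSq_mul_le_transpose {ι κ : Type*} [Fintype ι] [Fintype κ] (M : Matrix ι κ ℝ)
    (z : κ → ℝ) :
    sigmaMinPosSq M * sqnorm (M.mulVec z) ≤ sqnorm (Mᵀ.mulVec (M.mulVec z)) := by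
  refine lower_bound_transpose M _ (fun w => sigmaMinPosSq_mul_le M _ fun y hy => ?_) z
  rw [mulVec_dot, transpose_transpose, hy, dotProduct_zero]

theorem exists_mulVec_ne_zero_of_sigmaMinPosSq_pos {ι κ : Type*} [Fintype ι] [Fintype κ]
    (M : Matrix ι κ ℝ) (h : 0 < sigmaMinPosSq M) : ∃ x, M.mulVec x ≠ 0 := by
  by_contra! hM
  -- The defining set is empty when `M = 0`, and `sInf ∅ = 0`.
  refine h.ne' ?_
  unfold sigmaMinPosSq
  convert Real.sInf_empty
  refine Set.eq_empty_iff_forall_notMem.mpr ?_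
  rintro r ⟨x, hx, hx1, -⟩
  have := hx x (hM x)
  rw [← sqnorm_eq_dot, hx1] at this
  exact one_ne_zero this

/-- A nonzero matrix that is bounded below on `(ker M)ᗮ` has its smallest positive singular value
bounded below; `M ≠ 0` is needed because `sInf ∅ = 0`. -/
theorem le_sigmaMinPosSq {ι κ : Type*} [Fintype ι] [Fintype κ] (M : Matrix ι κ ℝ) (c : ℝ)
    (hM : ∃ x, M.mulVec x ≠ 0)
    (h : ∀ w, c * sqnorm (Mᵀ.mulVec w) ≤ sqnorm (M.mulVec (Mᵀ.mulVec w))) :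
    c ≤ sigmaMinPosSq M := by
  obtain ⟨x, hx⟩ := hM
  refine le_csInf ?_ ?_
  · set y := Mᵀ.mulVec (M.mulVec x) with hy
    have h0 : 0 < sqnorm y := by
      refine (sqnorm_nonneg _).lt_of_ne' fun h0 => hx (sqnorm_eq_zero ?_)
      rw [sqnorm_eq_dot, mulVec_dot, ← hy, sqnorm_eq_zero h0, dotProduct_zero]
    refine ⟨_, (Real.sqrt (sqnorm y))⁻¹ • y, ?_, ?_, rfl⟩
    · intro w hw
      rw [smul_dotProduct, hy, mulVec_dot, transpose_transpose, hw, dotProduct_zero, smul_zero]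
    · rw [sqnorm_smul, inv_pow, Real.sq_sqrt h0.le, inv_mul_cancel₀ h0.ne']
  · rintro r ⟨y, hy, hy1, rfl⟩
    obtain ⟨w, rfl⟩ := mem_range_transpose M y hy
    simpa [hy1] using h w

theorem sqnorm_mulVec_le_frobenius {ι κ : Type*} [Fintype ι] [Fintype κ] (M : Matrix ι κ ℝ)
    (x : κ → ℝ) : sqnorm (M.mulVec x) ≤ (∑ i, sqnorm (M i)) * sqnorm x := by
  rw [Finset.sum_mul]
  exact Finset.sum_le_sum fun i _ => dot_sq_le (M i) x

theorem sqnorm_mulVec_le {ι κ : Type*} [Fintype ι] [Fintype κ] (M : Matrix ι κ ℝ)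
    (x : κ → ℝ) : sqnorm (M.mulVec x) ≤ sigmaMaxSq M * sqnorm x := by
  rcases (sqnorm_nonneg x).eq_or_lt with h0 | h0
  · rw [sqnorm_eq_zero h0.symm, mulVec_zero]
    simp [sqnorm]
  have hs : (Real.sqrt (sqnorm x))⁻¹ ^ 2 = (sqnorm x)⁻¹ := by
    rw [inv_pow, Real.sq_sqrt h0.le]
  have : (sqnorm x)⁻¹ * sqnorm (M.mulVec x) ≤ sigmaMaxSq M := by
    refine le_csSup ⟨∑ i, sqnorm (M i), ?_⟩ ⟨(Real.sqrt (sqnorm x))⁻¹ • x, ?_, ?_⟩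
    · rintro r ⟨y, hy, rfl⟩
      simpa [hy] using sqnorm_mulVec_le_frobenius M y
    · rw [sqnorm_smul, hs, inv_mul_cancel₀ h0.ne']
    · rw [mulVec_smul, sqnorm_smul, hs]
  rwa [inv_mul_eq_div, div_le_iff₀ h0] at this

theorem sigmaMaxSq_nonneg {ι κ : Type*} [Fintype ι] [Fintype κ] (M : Matrix ι κ ℝ) :
    0 ≤ sigmaMaxSq M := by
  refine Real.sSup_nonneg ?_
  rintro r ⟨y, -, rfl⟩
  exact sqnorm_nonneg _

theorem sqnorm_transpose_mulVec_le {ι κ : Type*} [Fintype ι] [Fintype κ] (M : Matrix ι κ ℝ)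
    (y : ι → ℝ) : sqnorm (Mᵀ.mulVec y) ≤ sigmaMaxSq M * sqnorm y := by
  have h1 : sqnorm (Mᵀ.mulVec y) = y ⬝ᵥ M.mulVec (Mᵀ.mulVec y) := by
    rw [sqnorm_eq_dot, mulVec_dot, transpose_transpose]
  have h2 := dot_sq_le y (M.mulVec (Mᵀ.mulVec y))
  have h3 := sqnorm_mulVec_le M (Mᵀ.mulVec y)
  rw [← h1] at h2
  rcases (sqnorm_nonneg (Mᵀ.mulVec y)).eq_or_lt with h0 | h0
  · rw [← h0]
    exact mul_nonneg (sigmaMaxSq_nonneg M) (sqnorm_nonneg _)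
  refine le_of_mul_le_mul_right ?_ h0
  nlinarith [mul_le_mul_of_nonneg_left h3 (sqnorm_nonneg y)]

/-- For a matrix with nonnegative quadratic form, the bound on the Rayleigh quotient over `(ker M)ᗮ`
gives a bound on `‖M x‖` by the Cauchy–Schwarz inequality. -/
theorem lamMinPos_sq_mul_le {ι : Type*} [Fintype ι] (M : Matrix ι ι ℝ)
    (hM : ∀ x : ι → ℝ, 0 ≤ x ⬝ᵥ M.mulVec x)
    (x : ι → ℝ) (h : ∀ y, M.mulVec y = 0 → x ⬝ᵥ y = 0) :
    lamMinPos M ^ 2 * sqnorm x ≤ sqnorm (M.mulVec x) := by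
  rcases (sqnorm_nonneg x).eq_or_lt with h0 | h0
  · rw [← h0, mul_zero]
    exact sqnorm_nonneg _
  have hl : 0 ≤ lamMinPos M := by
    refine Real.sInf_nonneg ?_
    rintro r ⟨y, -, -, rfl⟩
    exact hM y
  have hs : (Real.sqrt (sqnorm x))⁻¹ ^ 2 = (sqnorm x)⁻¹ := by
    rw [inv_pow, Real.sq_sqrt h0.le]
  have h1 : lamMinPos M ≤ (sqnorm x)⁻¹ * (x ⬝ᵥ M.mulVec x) := by
    refine csInf_le ⟨0, ?_⟩ ⟨(Real.sqrt (sqnorm x))⁻¹ • x, ?_, ?_, ?_⟩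
    · rintro r ⟨y, -, -, rfl⟩
      exact hM y
    · intro y hy
      rw [smul_dotProduct, h y hy, smul_zero]
    · rw [sqnorm_smul, hs, inv_mul_cancel₀ h0.ne']
    · rw [mulVec_smul, smul_dotProduct, dotProduct_smul, ← hs]
      simp only [smul_eq_mul]
      ring
  rw [inv_mul_eq_div, le_div_iff₀ h0] at h1
  have h2 := dot_sq_le x (M.mulVec x)
  have h3 := pow_le_pow_left₀ (mul_nonneg hl h0.le) h1 2
  refine le_of_mul_le_mul_right ?_ h0
  nlinarith

/-! ### The blocks: consensus vectors, `𝐀` and `𝐖` -/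

/-- The consensus vector `(w, …, w)` of `(ℝ^m)^n`. -/
def consensusVec (n : ℕ) {m : ℕ} (w : Fin m → ℝ) : Fin n × Fin m → ℝ := fun q => w q.2

/-- The average `(1/n) ∑ᵢ uᵢ` of a vector of `(ℝ^m)^n`. -/
def avg {n m : ℕ} (u : Fin n × Fin m → ℝ) : Fin m → ℝ := fun r => (∑ i, u (i, r)) / n

theorem blockDiagA_transpose_consensusVec {n m : ℕ} {d : Fin n → ℕ}
    (A : ∀ i, Matrix (Fin m) (Fin (d i)) ℝ) (w : Fin m → ℝ) :
    (blockDiagA A)ᵀ.mulVec (consensusVec n w) = (hcat A)ᵀ.mulVec w := by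
  ext q
  simp [mulVec, dotProduct, blockDiagA, hcat, consensusVec, Fintype.sum_prod_type_right, ite_mul]

theorem sqnorm_blockDiagA_transpose_le {n m : ℕ} {d : Fin n → ℕ}
    (A : ∀ i, Matrix (Fin m) (Fin (d i)) ℝ) (u : Fin n × Fin m → ℝ) :
    sqnorm ((blockDiagA A)ᵀ.mulVec u) ≤ (⨆ i, sigmaMaxSq (A i)) * sqnorm u := by
  have h1 : sqnorm ((blockDiagA A)ᵀ.mulVec u)
      = ∑ i, sqnorm ((A i)ᵀ.mulVec fun r => u (i, r)) := by
    simp only [sqnorm, Fintype.sum_sigma]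
    refine Finset.sum_congr rfl fun i _ => Finset.sum_congr rfl fun k _ => ?_
    simp [mulVec, dotProduct, blockDiagA, Fintype.sum_prod_type_right, ite_mul]
  have h2 : sqnorm u = ∑ i, sqnorm fun r => u (i, r) := by
    simp only [sqnorm, Fintype.sum_prod_type]
  rw [h1, h2, Finset.mul_sum]
  refine Finset.sum_le_sum fun i _ => (sqnorm_transpose_mulVec_le (A i) _).trans ?_
  exact mul_le_mul_of_nonneg_right
    (le_ciSup (f := fun i => sigmaMaxSq (A i)) (Set.finite_range _).bddAbove i) (sqnorm_nonneg _)

theorem kronW_mulVec {n m : ℕ} (W : Matrix (Fin n) (Fin n) ℝ) (u : Fin n × Fin m → ℝ)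
    (q : Fin n × Fin m) :
    (kronW m W).mulVec u q = W.mulVec (fun i => u (i, q.2)) q.1 := by
  simp [mulVec, dotProduct, kronW, Fintype.sum_prod_type, mul_ite, ite_mul]

theorem kronW_transpose {n m : ℕ} (W : Matrix (Fin n) (Fin n) ℝ) (hW : Wᵀ = W) :
    (kronW m W)ᵀ = kronW m W := by
  ext p q
  have : W q.1 p.1 = W p.1 q.1 := congrFun (congrFun hW p.1) q.1
  simp [kronW, this, eq_comm]

theorem kronW_consensusVec {n m : ℕ} (W : Matrix (Fin n) (Fin n) ℝ)
    (hW_ker : ∀ x : Fin n → ℝ, W.mulVec x = 0 ↔ ∀ i j, x i = x j) (w : Fin m → ℝ) :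
    (kronW m W).mulVec (consensusVec n w) = 0 := by
  ext q
  rw [kronW_mulVec]
  exact congrFun ((hW_ker _).mpr fun _ _ => rfl) q.1

theorem sqnorm_kronW_ge {n m : ℕ} (W : Matrix (Fin n) (Fin n) ℝ)
    (hW_psd : ∀ x : Fin n → ℝ, 0 ≤ x ⬝ᵥ W.mulVec x)
    (hW_ker : ∀ x : Fin n → ℝ, W.mulVec x = 0 ↔ ∀ i j, x i = x j)
    (u : Fin n × Fin m → ℝ) (hu : ∀ r, ∑ i, u (i, r) = 0) :
    lamMinPos W ^ 2 * sqnorm u ≤ sqnorm ((kronW m W).mulVec u) := by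
  have h1 : sqnorm ((kronW m W).mulVec u)
      = ∑ r, sqnorm (W.mulVec fun i => u (i, r)) := by
    simp only [sqnorm, Fintype.sum_prod_type_right, kronW_mulVec]
  have h2 : sqnorm u = ∑ r, sqnorm fun i => u (i, r) := by
    simp only [sqnorm, Fintype.sum_prod_type_right]
  rw [h1, h2, Finset.mul_sum]
  refine Finset.sum_le_sum fun r _ => lamMinPos_sq_mul_le W hW_psd _ fun y hy => ?_
  rw [hW_ker] at hy
  rcases isEmpty_or_nonempty (Fin n) with he | ⟨⟨i₀⟩⟩
  · simp [dotProduct]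
  · simp only [dotProduct, hy _ i₀, ← Finset.sum_mul, hu r, zero_mul]

theorem sum_sub_avg {n m : ℕ} (hn : 0 < n) (u : Fin n × Fin m → ℝ) (r : Fin m) :
    ∑ i, (u - consensusVec n (avg u)) (i, r) = 0 := by
  have : (n : ℝ) ≠ 0 := by positivity
  simp [consensusVec, avg, Finset.sum_sub_distrib, mul_div_cancel₀ _ this]

theorem sqnorm_consensusVec_add {n m : ℕ} (w : Fin m → ℝ) (h : Fin n × Fin m → ℝ)
    (hh : ∀ r, ∑ i, h (i, r) = 0) :
    sqnorm (consensusVec n w + h) = n * sqnorm w + sqnorm h := by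
  have h1 : consensusVec n w ⬝ᵥ h = 0 := by
    simp [dotProduct, consensusVec, Fintype.sum_prod_type_right, ← Finset.mul_sum, hh]
  have h2 : sqnorm (consensusVec n w) = n * sqnorm w := by
    simp [sqnorm, consensusVec, Fintype.sum_prod_type]
  rw [sqnorm_add, h1, h2]
  ring

/-! ### The two weighted triangle inequalities -/

theorem sqnorm_add_ge_half {ι : Type*} [Fintype ι] (g h : ι → ℝ) :
    sqnorm g / 2 - sqnorm h ≤ sqnorm (g + h) := by
  have h1 := sqnorm_nonneg (g + (2 : ℝ) • h)
  rw [sqnorm_add, sqnorm_smul, dotProduct_smul, smul_eq_mul] at h1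
  rw [sqnorm_add]
  linarith

/-- The Young inequality `‖a + b‖² ≥ e/(L+e) ‖b‖² - (e/L) ‖a‖²`, stated without
division so that it covers `L = 0`. -/
theorem sqnorm_add_ge_weighted {ι : Type*} [Fintype ι] (a b : ι → ℝ) {L e N V : ℝ}
    (hL : 0 ≤ L) (he : 0 < e) (hN : 0 ≤ N) (ha : sqnorm a ≤ L * N)
    (hb : (L + e) * V ≤ sqnorm b) : e * V - e * N ≤ sqnorm (a + b) := by
  rcases hL.eq_or_lt with rfl | hL
  · have h0 : a = 0 := sqnorm_eq_zero (le_antisymm (by linarith) (sqnorm_nonneg a))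
    rw [h0, zero_add]
    nlinarith
  have h1 := sqnorm_nonneg ((L + e) • a + L • b)
  rw [sqnorm_add, sqnorm_smul, sqnorm_smul, dotProduct_smul, smul_dotProduct] at h1
  simp only [smul_eq_mul] at h1
  rw [sqnorm_add]
  have hp : 0 < L * (L + e) := by positivity
  refine le_of_mul_le_mul_left ?_ hp
  have h2 := mul_le_mul_of_nonneg_left ha (by positivity : 0 ≤ e * (L + e))
  have h3 := mul_le_mul_of_nonneg_left hb (by positivity : 0 ≤ e * L)
  nlinarith

/-! ### The consensus and local components -/

section Projector

variable {ι κ δ : Type*} [Fintype ι] [Fintype κ] [Fintype δ]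

/-- Pythagoras for the projector `P` onto `ker K`, applied to `a + b` with `b ∈ range Kᵀ`, on which
`P` vanishes. -/
theorem sqnorm_add_range_transpose (K : Matrix κ δ ℝ) (P : Matrix δ δ ℝ) (hP_symm : Pᵀ = P)
    (hP_ker : ∀ x, K.mulVec (P.mulVec x) = 0)
    (hP_fix : ∀ x, K.mulVec x = 0 → P.mulVec x = x) (a : δ → ℝ) (v : κ → ℝ) :
    sqnorm (a + Kᵀ.mulVec v)
      = sqnorm (P.mulVec a) + sqnorm ((a - P.mulVec a) + Kᵀ.mulVec v) := by
  have h1 : P.mulVec a ⬝ᵥ (a - P.mulVec a) = 0 := by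
    rw [mulVec_dot, hP_symm, mulVec_sub, hP_fix _ (hP_ker a), sub_self, dotProduct_zero]
  have h2 : P.mulVec a ⬝ᵥ Kᵀ.mulVec v = 0 := by
    rw [← mulVec_dot, hP_ker, zero_dotProduct]
  have h3 : a + Kᵀ.mulVec v = P.mulVec a + ((a - P.mulVec a) + Kᵀ.mulVec v) := by abel
  rw [h3, sqnorm_add, dotProduct_add, h1, h2]
  ring

/-- The lower bound for the part of `Bᵀ z` that comes from the consensus component `w` and the
local component `v`. The part in `ker K` only sees `w` and gives `N tμ ‖w‖²`; the part
orthogonal to it sees `v`, and `w` perturbs it by at most `N LS ‖w‖²`. -/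
theorem consensus_local_bound (H : Matrix ι δ ℝ) (K : Matrix κ δ ℝ) (P : Matrix δ δ ℝ)
    (hP_symm : Pᵀ = P) (hP_ker : ∀ x, K.mulVec (P.mulVec x) = 0)
    (hP_fix : ∀ x, K.mulVec x = 0 → P.mulVec x = x) {N tμ LS μC β : ℝ} (hN : 0 < N)
    (htμ : tμ = 1 / N * sigmaMinPosSq (H * P)) (htμ_pos : 0 < tμ)
    (hLS : LS = 1 / N * sigmaMaxSq H) (hμC : μC = sigmaMinPosSq K) (hμC_pos : 0 < μC)
    (hβ : β ^ 2 = (LS + tμ / 2) / μC) (w : ι → ℝ) (v : κ → ℝ)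
    (hw : ∃ x, w = (H * P).mulVec x) (hv : ∃ y, v = K.mulVec y) :
    tμ / 2 * (N * sqnorm w + sqnorm v) ≤ sqnorm (Hᵀ.mulVec w + β • Kᵀ.mulVec v) := by
  set a := Hᵀ.mulVec w with ha
  have hLS0 : 0 ≤ LS := by
    rw [hLS]
    exact mul_nonneg (by positivity) (sigmaMaxSq_nonneg H)
  have h1 : tμ * (N * sqnorm w) ≤ sqnorm (P.mulVec a) := by
    obtain ⟨x, rfl⟩ := hw
    have h := sigmaMinPosSq_mul_le_transpose (H * P) x
    have hs : sigmaMinPosSq (H * P) = tμ * N := by rw [htμ]; field_simp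
    rw [transpose_mul, hP_symm, ← mulVec_mulVec _ P Hᵀ, ← ha, hs] at h
    linarith
  have h2 : sqnorm (a - P.mulVec a) ≤ LS * (N * sqnorm w) := by
    have h := sqnorm_transpose_mulVec_le H w
    have hs : sigmaMaxSq H = LS * N := by rw [hLS]; field_simp
    have hpy := sqnorm_add_range_transpose K P hP_symm hP_ker hP_fix a 0
    rw [mulVec_zero, add_zero, add_zero] at hpy
    rw [← ha, hs] at h
    linarith [sqnorm_nonneg (P.mulVec a)]
  have h3 : (LS + tμ / 2) * sqnorm v ≤ sqnorm (Kᵀ.mulVec (β • v)) := by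
    obtain ⟨y, rfl⟩ := hv
    have h := sigmaMinPosSq_mul_le_transpose K y
    have hs : LS + tμ / 2 = β ^ 2 * μC := by rw [hβ]; field_simp
    rw [mulVec_smul, sqnorm_smul, hs, mul_assoc, hμC]
    exact mul_le_mul_of_nonneg_left h (sq_nonneg β)
  have h4 := sqnorm_add_ge_weighted _ _ hLS0 (half_pos htμ_pos)
    (mul_nonneg hN.le (sqnorm_nonneg w)) h2 h3
  rw [← mulVec_smul, sqnorm_add_range_transpose K P hP_symm hP_ker hP_fix]
  linarith

/-- Modulo pairs `(w, v)` with `Hᵀ w + β Kᵀ v = 0`, the first component can be moved into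
`range (H P)` and the second into `range K`. -/
theorem exists_reduced_pair (H : Matrix ι δ ℝ) (K : Matrix κ δ ℝ) (P : Matrix δ δ ℝ)
    (hP_symm : Pᵀ = P) (hP_fix : ∀ x, K.mulVec x = 0 → P.mulVec x = x) {β : ℝ} (hβ : β ≠ 0)
    (w : ι → ℝ) (v : κ → ℝ) :
    ∃ w' v', (∃ x, w' = (H * P).mulVec x) ∧ (∃ y, v' = K.mulVec y) ∧
      Hᵀ.mulVec w' + β • Kᵀ.mulVec v' = Hᵀ.mulVec w + β • Kᵀ.mulVec v := by
  obtain ⟨x, hx⟩ := exists_normal_eq (H * P) w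
  -- The discarded part `w - w'` is killed by `P Hᵀ`, so `Hᵀ (w - w')` is orthogonal to `ker K`
  -- and can be absorbed into `β Kᵀ v`.
  obtain ⟨r, hr⟩ := mem_range_transpose K (Hᵀ.mulVec (w - (H * P).mulVec x)) (by
    intro q hq
    have h0 : P.mulVec (Hᵀ.mulVec (w - (H * P).mulVec x)) = 0 := by
      rw [transpose_mul, hP_symm] at hx
      rw [mulVec_mulVec, mulVec_sub, hx, sub_self]
    have h1 := mulVec_dot P (Hᵀ.mulVec (w - (H * P).mulVec x)) q
    rwa [h0, zero_dotProduct, hP_symm, hP_fix q hq, eq_comm] at h1)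
  obtain ⟨y, hy⟩ := exists_normal_eq K (v + β⁻¹ • r)
  refine ⟨_, _, ⟨x, rfl⟩, ⟨y, rfl⟩, ?_⟩
  rw [hy, mulVec_add, mulVec_smul, ← hr, smul_add, smul_inv_smul₀ hβ, mulVec_sub]
  abel

end Projector

/-- lower bound `σ_min+²(B) ≥ μ̃/4` for the block matrix
`B = [[𝐀, α𝐖], [β𝐂, 0]]` of coupled and local constraints, when `μ̃ > 0`. -/
theorem coupled_local_sigmaMinPos_lower {n m : ℕ} (d p : Fin n → ℕ)
    (A : ∀ i : Fin n, Matrix (Fin m) (Fin (d i)) ℝ)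
    (C : ∀ i : Fin n, Matrix (Fin (p i)) (Fin (d i)) ℝ)
    -- W is a gossip matrix
    (W : Matrix (Fin n) (Fin n) ℝ)
    (hW_symm : Wᵀ = W)
    (hW_psd : ∀ x : Fin n → ℝ, 0 ≤ x ⬝ᵥ W.mulVec x)
    (hW_ker : ∀ x : Fin n → ℝ, W.mulVec x = 0 ↔ ∀ i j, x i = x j)
    -- P is the orthogonal projector onto ker 𝐂
    (P : Matrix ((i : Fin n) × Fin (d i)) ((i : Fin n) × Fin (d i)) ℝ)
    (hP_symm : Pᵀ = P)
    (hP_ker : ∀ x, (Matrix.blockDiagonal' C).mulVec (P.mulVec x) = 0)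
    (hP_fix : ∀ x, (Matrix.blockDiagonal' C).mulVec x = 0 → P.mulVec x = x)
    (tμ : ℝ) (htμ : tμ = 1 / (n : ℝ) * sigmaMinPosSq (hcat A * P)) (htμ_pos : 0 < tμ)
    (LA : ℝ) (hLA : LA = ⨆ i, sigmaMaxSq (A i))
    (LS : ℝ) (hLS : LS = 1 / (n : ℝ) * sigmaMaxSq (hcat A))
    (μW : ℝ) (hμW : μW = lamMinPos W ^ 2) (hμW_pos : 0 < μW)
    (μC : ℝ) (hμC : μC = sigmaMinPosSq (Matrix.blockDiagonal' C)) (hμC_pos : 0 < μC)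
    (α β : ℝ) (hα : α ^ 2 = (LA + tμ / 4) / μW) (hβ : β ^ 2 = (LS + tμ / 2) / μC)
    (B : Matrix ((Fin n × Fin m) ⊕ ((i : Fin n) × Fin (p i)))
      (((i : Fin n) × Fin (d i)) ⊕ (Fin n × Fin m)) ℝ)
    (hB : B = Matrix.fromBlocks (blockDiagA A) (α • kronW m W)
      (β • Matrix.blockDiagonal' C) 0) :
    tμ / 4 ≤ sigmaMinPosSq B ∧
    ∀ z : ((Fin n × Fin m) ⊕ ((i : Fin n) × Fin (p i))) → ℝ,
      (∀ w, Bᵀ.mulVec w = 0 → z ⬝ᵥ w = 0) →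
      tμ / 4 * sqnorm z ≤ sqnorm (Bᵀ.mulVec z) := by
  have hn0 : n ≠ 0 := by
    -- `1 / 0 = 0` would force `tμ = 0`.
    rintro rfl
    simp [htμ] at htμ_pos
  have hn : (0 : ℝ) < n := by positivity
  have hLS0 : 0 ≤ LS := by
    rw [hLS]
    exact mul_nonneg (by positivity) (sigmaMaxSq_nonneg _)
  have hβ0 : β ≠ 0 := by
    have : 0 < β ^ 2 := by
      rw [hβ]
      positivity
    exact fun h => by simp [h] at this
  set K := Matrix.blockDiagonal' C with hK
  have hBT : ∀ u v, Bᵀ.mulVec (Sum.elim u v)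
      = Sum.elim ((blockDiagA A)ᵀ.mulVec u + β • Kᵀ.mulVec v) (α • (kronW m W).mulVec u) := by
    intro u v
    rw [hB, fromBlocks_transpose, fromBlocks_mulVec]
    simp [transpose_smul, smul_mulVec, kronW_transpose W hW_symm]
  have hsq : ∀ {ι κ : Type} [Fintype ι] [Fintype κ] (u : ι → ℝ) (v : κ → ℝ),
      sqnorm (Sum.elim u v) = sqnorm u + sqnorm v := by
    intro ι κ _ _ u v
    simp [sqnorm, Fintype.sum_sum_type]
  have hlow : ∀ z, (∀ w, Bᵀ.mulVec w = 0 → z ⬝ᵥ w = 0) →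
      tμ / 4 * sqnorm z ≤ sqnorm (Bᵀ.mulVec z) := by
    intro z hz
    obtain ⟨u, v, rfl⟩ : ∃ u v, z = Sum.elim u v :=
      ⟨_, _, (Sum.elim_comp_inl_inr z).symm⟩
    set h := u - consensusVec n (avg u) with hh
    have hsum : ∀ r, ∑ i, h (i, r) = 0 := sum_sub_avg (Nat.pos_of_ne_zero hn0) u
    have hu : u = consensusVec n (avg u) + h := by rw [hh]; abel
    obtain ⟨w', v', hw', hv', he⟩ :=
      exists_reduced_pair (hcat A) K P hP_symm hP_fix hβ0 (avg u) v
    have hBz : Bᵀ.mulVec (Sum.elim (consensusVec n w' + h) v') = Bᵀ.mulVec (Sum.elim u v) := by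
      rw [hBT, hBT]
      congr 1
      · conv_rhs => rw [hu]
        rw [mulVec_add, mulVec_add, blockDiagA_transpose_consensusVec,
          blockDiagA_transpose_consensusVec, add_right_comm, he, add_right_comm]
      · conv_rhs => rw [hu]
        rw [mulVec_add, mulVec_add, kronW_consensusVec W hW_ker, kronW_consensusVec W hW_ker]
    -- `z` is the vector of minimal norm in its class modulo `ker Bᵀ`.
    have hmin : sqnorm (Sum.elim u v) ≤ sqnorm (Sum.elim (consensusVec n w' + h) v') := by
      set z := Sum.elim u v
      set z' := Sum.elim (consensusVec n w' + h) v'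
      have h0 := hz (z' - z) (by rw [mulVec_sub, hBz, sub_self])
      have h1 := sqnorm_add z (z' - z)
      rw [h0, add_sub_cancel] at h1
      linarith [sqnorm_nonneg (z' - z)]
    refine (mul_le_mul_of_nonneg_left hmin (by positivity)).trans ?_
    rw [← hBz, hBT, hsq, hsq, sqnorm_consensusVec_add _ _ hsum, sqnorm_smul, mulVec_add,
      mulVec_add, kronW_consensusVec W hW_ker, zero_add, blockDiagA_transpose_consensusVec]
    have e1 := consensus_local_bound (hcat A) K P hP_symm hP_ker hP_fix hn htμ htμ_pos hLS hμC
      hμC_pos hβ w' v' hw' hv'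
    have e2 := sqnorm_add_ge_half ((hcat A)ᵀ.mulVec w' + β • Kᵀ.mulVec v')
      ((blockDiagA A)ᵀ.mulVec h)
    rw [add_right_comm] at e2
    have e3 := sqnorm_blockDiagA_transpose_le A h
    rw [← hLA] at e3
    have e4 : (LA + tμ / 4) * sqnorm h ≤ α ^ 2 * sqnorm ((kronW m W).mulVec h) := by
      have hs : LA + tμ / 4 = α ^ 2 * μW := by rw [hα]; field_simp
      rw [hs, mul_assoc, hμW]
      exact mul_le_mul_of_nonneg_left (sqnorm_kronW_ge W hW_psd hW_ker h hsum) (sq_nonneg α)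
    linarith
  refine ⟨?_, hlow⟩
  refine le_sigmaMinPosSq B _ ?_ fun w => ?_
  · obtain ⟨x, hx⟩ := exists_mulVec_ne_zero_of_sigmaMinPosSq_pos K (hμC ▸ hμC_pos)
    refine ⟨Sum.elim x 0, fun h0 => hx ?_⟩
    rw [hB, fromBlocks_mulVec] at h0
    ext i
    have := congrFun h0 (Sum.inr i)
    simpa [smul_mulVec, hβ0] using this
  · have := lower_bound_transpose Bᵀ (tμ / 4) (fun y => hlow _ fun k hk => by
      rw [transpose_transpose, mulVec_dot, hk, dotProduct_zero]) w
    rwa [transpose_transpose] at this
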